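/- Let m > 0. The matrix-valued function φ is locally integrable (entrywise) on ℝ³, and it is a fundamental solution of the free Dirac operator in the distributional sense: for every smooth compactly supported function χ : ℝ³ → ℂ, i Σ_{j=1}^3 α_j ( ∫_{ℝ³} (∂_j χ)(x) φ(x) dx ) + m β ( ∫_{ℝ³} χ(x) φ(x) dx ) = χ(0) I₄, where the integrals are entrywise Lebesgue integrals of ℂ^{4×4}-valued functions. -/

import Mathlib

open Matrix

/-- The Pauli matrices `σ₁, σ₂, σ₃`. -/
noncomputable def pauli : Fin 3 → Matrix (Fin 2) (Fin 2) ℂ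
  | 0 => !![0, 1; 1, 0]
  | 1 => !![0, -Complex.I; Complex.I, 0]
  | 2 => !![1, 0; 0, -1]

/-- The Dirac matrices `α₁, α₂, α₃`, given in 2×2 blocks by `α_j = [[0, σ_j], [σ_j, 0]]`. -/
noncomputable def diracAlpha : Fin 3 → Matrix (Fin 4) (Fin 4) ℂ
  | 0 => !![0, 0, 0, 1;
            0, 0, 1, 0;
            0, 1, 0, 0;
            1, 0, 0, 0]
  | 1 => !![0, 0, 0, -Complex.I;
            0, 0, Complex.I, 0;
            0, -Complex.I, 0, 0;
            Complex.I, 0, 0, 0]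
  | 2 => !![0, 0, 1, 0;
            0, 0, 0, -1;
            1, 0, 0, 0;
            0, -1, 0, 0]

/-- The Dirac matrix `β = [[I₂, 0], [0, -I₂]]`. -/
noncomputable def diracBeta : Matrix (Fin 4) (Fin 4) ℂ :=
  !![1, 0, 0, 0;
     0, 1, 0, 0;
     0, 0, -1, 0;
     0, 0, 0, -1]

/-- For `p ∈ ℝ³`, the matrix `α·p = Σ_j p_j α_j`. -/
noncomputable def alphaDot (p : EuclideanSpace ℝ (Fin 3)) : Matrix (Fin 4) (Fin 4) ℂ :=
  ∑ j : Fin 3, (p j : ℂ) • diracAlpha j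


/-- The fundamental solution `φ` of the free Dirac operator `D = -i α·∇ + m β`:
`φ(x) = (e^{-m|x|}/(4π|x|)) (m β + (1 + m|x|) i (α·x)/|x|²)` for `x ≠ 0`. -/
noncomputable def phiFund (m : ℝ) (x : EuclideanSpace ℝ (Fin 3)) : Matrix (Fin 4) (Fin 4) ℂ :=
  ((Real.exp (-(m * ‖x‖)) / (4 * Real.pi * ‖x‖) : ℝ) : ℂ) •
    ((m : ℂ) • diracBeta +
      (((1 + m * ‖x‖) / ‖x‖ ^ 2 : ℝ) : ℂ) • (Complex.I • alphaDot x))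


open MeasureTheory

/- Let `Y = e^{-m|x|} / (4π|x|)` be the Yukawa potential. Then `φ = (-iα·∇ + mβ) Y` off the origin,
and the Clifford relations give `(-iα·∇ + mβ)² = -Δ + m²`, so the claim reduces to
`(-Δ + m²) Y = δ₀`. For the latter, `m² Y χ + ∇χ·∇Y` is `-(4π)⁻¹ |x|⁻² ∂_r` of the function
`(1 + m|x|) e^{-m|x|} χ`, whose integral in polar coordinates is elementary. The only other
analytic input is integration by parts across the singularity: in a direction `v` one discards the
line `ℝv`, which is null, and along every remaining line parallel to `v` the potential is smooth. -/

section LineDerivative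

variable {E F G W : Type*} [NormedAddCommGroup E] [NormedSpace ℝ E]
  [NormedAddCommGroup F] [NormedSpace ℝ F]

lemma hasLineDerivAt_indicator_compl_submodule {p : Submodule ℝ E} {v : E} (hv : v ∈ p)
    {f f' : E → F} (hf : ∀ x ∉ p, HasLineDerivAt ℝ f (f' x) x v) (x : E) :
    HasLineDerivAt ℝ ((p : Set E)ᶜ.indicator f) ((p : Set E)ᶜ.indicator f' x) x v := by
  have mem_iff (t : ℝ) : x + t • v ∈ p ↔ x ∈ p := p.add_mem_iff_left (p.smul_mem t hv)
  by_cases hx : x ∈ p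
  · simpa [HasLineDerivAt, Set.indicator, mem_iff, hx] using hasDerivAt_const (0 : ℝ) (0 : F)
  · simpa [HasLineDerivAt, Set.indicator, mem_iff, hx] using hf x hx

variable [NormedAddCommGroup G] [NormedSpace ℝ G] [NormedAddCommGroup W] [NormedSpace ℝ W]
  [FiniteDimensional ℝ E] [MeasurableSpace E] [BorelSpace E] {μ : Measure E} [μ.IsAddHaarMeasure]

/- A proper subspace is null, and cutting `f` and `g` off on a subspace containing `v` keeps them
differentiable along `v`, so no regularity is needed there. -/
theorem integral_bilinear_hasLineDerivAt_right_eq_neg_left_off_submodule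
    {p : Submodule ℝ E} (hp : p ≠ ⊤) {v : E} (hv : v ∈ p)
    {f f' : E → F} {g g' : E → G} {B : F →L[ℝ] G →L[ℝ] W}
    (hf'g : Integrable (fun x ↦ B (f' x) (g x)) μ) (hfg' : Integrable (fun x ↦ B (f x) (g' x)) μ)
    (hfg : Integrable (fun x ↦ B (f x) (g x)) μ)
    (hf : ∀ x ∉ p, HasLineDerivAt ℝ f (f' x) x v) (hg : ∀ x ∉ p, HasLineDerivAt ℝ g (g' x) x v) :
    ∫ x, B (f x) (g' x) ∂μ = -∫ x, B (f' x) (g x) ∂μ := by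
  have indicator_ae_eq (a : E → F) (b : E → G) :
      (fun x ↦ B ((p : Set E)ᶜ.indicator a x) ((p : Set E)ᶜ.indicator b x)) =ᵐ[μ]
        fun x ↦ B (a x) (b x) := by
    filter_upwards [compl_mem_ae_iff.2 (Measure.addHaar_submodule μ p hp)] with x hx
    simp only [Set.indicator_of_mem hx]
  rw [← integral_congr_ae (indicator_ae_eq f g'), ← integral_congr_ae (indicator_ae_eq f' g)]
  exact integral_bilinear_hasLineDerivAt_right_eq_neg_left_of_integrable
    (hf'g.congr (indicator_ae_eq f' g).symm) (hfg'.congr (indicator_ae_eq f g').symm)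
    (hfg.congr (indicator_ae_eq f g).symm)
    (fun x _ ↦ hasLineDerivAt_indicator_compl_submodule hv hf x)
    (fun x _ ↦ hasLineDerivAt_indicator_compl_submodule hv hg x)

theorem integral_smul_fderiv_eq_neg_of_hasLineDerivAt_off_zero (hE : 1 < Module.finrank ℝ E)
    {g g' : E → ℝ} {v : E} (hg : LocallyIntegrable g μ) (hg' : LocallyIntegrable g' μ)
    (hderiv : ∀ x ≠ 0, HasLineDerivAt ℝ g (g' x) x v)
    {χ : E → F} (hχ : ContDiff ℝ 1 χ) (hc : HasCompactSupport χ) :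
    ∫ x, g x • fderiv ℝ χ x v ∂μ = -∫ x, g' x • χ x ∂μ := by
  have span_ne_top : Submodule.span ℝ {v} ≠ ⊤ := fun h ↦ by
    have finrank_le := finrank_span_le_card (R := ℝ) ({v} : Set E)
    rw [h, finrank_top, Set.toFinset_singleton, Finset.card_singleton] at finrank_le
    exact hE.not_ge finrank_le
  have hχ' : Continuous fun x ↦ fderiv ℝ χ x v :=
    (hχ.continuous_fderiv one_ne_zero).clm_apply continuous_const
  refine integral_bilinear_hasLineDerivAt_right_eq_neg_left_off_submodule
    (B := ContinuousLinearMap.lsmul ℝ ℝ) span_ne_top (Submodule.mem_span_singleton_self v)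
    (hg'.integrable_smul_right_of_hasCompactSupport hχ.continuous hc)
    (hg.integrable_smul_right_of_hasCompactSupport hχ' (hc.fderiv_apply ℝ v))
    (hg.integrable_smul_right_of_hasCompactSupport hχ.continuous hc)
    (fun x hx ↦ hderiv x (ne_of_mem_of_not_mem (zero_mem _) hx).symm)
    (fun x _ ↦ (hχ.differentiable one_ne_zero x).hasFDerivAt.hasLineDerivAt v)

theorem integral_fderiv_apply_smul_fderiv_comm_off_zero (hE : 1 < Module.finrank ℝ E)
    {g : E → ℝ} {g' : E → E →L[ℝ] ℝ} (hg : LocallyIntegrable g μ)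
    (hg' : ∀ v, LocallyIntegrable (fun x ↦ g' x v) μ)
    (hderiv : ∀ x ≠ 0, HasFDerivAt g (g' x) x)
    {χ : E → F} (hχ : ContDiff ℝ 2 χ) (hc : HasCompactSupport χ) (v w : E) :
    ∫ x, g' x v • fderiv ℝ χ x w ∂μ = ∫ x, g' x w • fderiv ℝ χ x v ∂μ := by
  have hχ' : ContDiff ℝ 1 (fderiv ℝ χ) := hχ.fderiv_right (by norm_num)
  have integral_second (v w : E) :
      ∫ x, g x • fderiv ℝ (fderiv ℝ χ) x v w ∂μ = -∫ x, g' x v • fderiv ℝ χ x w ∂μ := by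
    rw [← integral_smul_fderiv_eq_neg_of_hasLineDerivAt_off_zero hE hg (hg' v)
      (fun x hx ↦ (hderiv x hx).hasLineDerivAt v) (hχ'.clm_apply contDiff_const)
      (hc.fderiv_apply ℝ w)]
    congr! 3 with x
    rw [fderiv_clm_apply (hχ'.differentiable one_ne_zero x) (differentiableAt_const w)]
    simp
  rw [← neg_inj, ← integral_second, ← integral_second]
  congr! 3 with x
  exact hχ.contDiffAt.isSymmSndFDerivAt (by simp) v w

end LineDerivative

section PolarCoordinates

open Set Metric Filter Topology Module

variable {E F : Type*} [NormedAddCommGroup F] [NormedSpace ℝ F]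

lemma integrable_volumeIoiPow_iff {n : ℕ} {f : ℝ → F} :
    Integrable (fun r : Ioi (0 : ℝ) ↦ f r) (Measure.volumeIoiPow n) ↔
      IntegrableOn (fun r ↦ r ^ n • f r) (Ioi 0) := by
  rw [integrableOn_iff_comap_subtypeVal measurableSet_Ioi, Measure.volumeIoiPow,
    integrable_withDensity_iff_integrable_smul' (E := F) (by fun_prop) (by simp)]
  refine integrable_congr (.of_forall fun r ↦ ?_)
  simp [ENNReal.toReal_ofReal (pow_nonneg (le_of_lt r.2) n)]

lemma integral_volumeIoiPow (n : ℕ) (f : ℝ → F) :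
    ∫ r : Ioi (0 : ℝ), f r ∂(Measure.volumeIoiPow n) = ∫ r in Ioi (0 : ℝ), r ^ n • f r := by
  rw [← integral_subtype_comap measurableSet_Ioi fun r ↦ r ^ n • f r, Measure.volumeIoiPow,
    integral_withDensity_eq_integral_toReal_smul (by fun_prop) (by simp)]
  refine integral_congr_ae (.of_forall fun r ↦ ?_)
  simp [ENNReal.toReal_ofReal (pow_nonneg (le_of_lt r.2) n)]

variable [NormedAddCommGroup E] [NormedSpace ℝ E]

lemma integral_Ioi_fderiv_smul_apply [CompleteSpace F] {f : E → F} (hf0 : ContinuousAt f 0)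
    (hf : ∀ x ≠ 0, DifferentiableAt ℝ f x) (hf_infty : Tendsto f (cocompact E) (𝓝 0))
    {ω : E} (hω : ω ≠ 0) (hint : IntegrableOn (fun r : ℝ ↦ fderiv ℝ f (r • ω) ω) (Ioi 0)) :
    ∫ r in Ioi (0 : ℝ), fderiv ℝ f (r • ω) ω = -f 0 := by
  have hray : ContinuousWithinAt (fun r : ℝ ↦ f (r • ω)) (Ici 0) 0 :=
    (ContinuousAt.comp (f := fun r : ℝ ↦ r • ω) (by simpa using hf0)
      (by fun_prop)).continuousWithinAt
  have hderiv (r : ℝ) (hr : r ∈ Ioi 0) :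
      HasDerivAt (fun r : ℝ ↦ f (r • ω)) (fderiv ℝ f (r • ω) ω) r := by
    simpa [Function.comp_def] using
      (hf (r • ω) (smul_ne_zero (ne_of_gt hr) hω)).hasFDerivAt.comp_hasDerivAt r
        ((hasDerivAt_id r).smul_const ω)
  have hlim : Tendsto (fun r : ℝ ↦ f (r • ω)) atTop (𝓝 0) :=
    hf_infty.comp ((isClosedEmbedding_smul_left hω).tendsto_cocompact.mono_left
      atTop_le_cocompact)
  simpa using integral_Ioi_of_hasDerivAt_of_tendsto hray hderiv hint hlim

variable [FiniteDimensional ℝ E] [MeasurableSpace E] [BorelSpace E]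
  (μ : Measure E) [μ.IsAddHaarMeasure]

lemma integrable_comp_smul_sphere_prod_Ioi {G : Type*} [NormedAddCommGroup G] {f : E → G}
    (hf : Integrable f μ) :
    Integrable (fun p : sphere (0 : E) 1 × Ioi (0 : ℝ) ↦ f ((p.2 : ℝ) • (p.1 : E)))
      (μ.toSphere.prod (Measure.volumeIoiPow (finrank ℝ E - 1))) := by
  rw [← μ.measurePreserving_homeomorphUnitSphereProd.integrable_comp_emb
    (homeomorphUnitSphereProd E).measurableEmbedding]
  have hf' : IntegrableOn f ({0}ᶜ : Set E) μ := hf.integrableOn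
  rw [integrableOn_iff_comap_subtypeVal (measurableSet_singleton 0).compl] at hf'
  refine hf'.congr (.of_forall fun x ↦ ?_)
  simp [smul_smul, norm_ne_zero_iff.2 x.2]

theorem ae_integrableOn_Ioi_pow_smul_comp_smul {f : E → F} (hf : Integrable f μ) :
    ∀ᵐ ω : sphere (0 : E) 1 ∂μ.toSphere,
      IntegrableOn (fun r : ℝ ↦ r ^ (finrank ℝ E - 1) • f (r • (ω : E))) (Ioi 0) :=
  (integrable_comp_smul_sphere_prod_Ioi μ hf).prod_right_ae.mono fun ω hω ↦
    integrable_volumeIoiPow_iff (f := fun r ↦ f (r • (ω : E))).1 hω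

variable [Nontrivial E]

theorem integral_eq_integral_sphere_integral_Ioi {f : E → F} (hf : Integrable f μ) :
    ∫ x, f x ∂μ = ∫ ω : sphere (0 : E) 1,
      (∫ r in Ioi (0 : ℝ), r ^ (finrank ℝ E - 1) • f (r • (ω : E))) ∂μ.toSphere := by
  have radial_integral (ω : sphere (0 : E) 1) :
      ∫ r in Ioi (0 : ℝ), r ^ (finrank ℝ E - 1) • f (r • (ω : E)) =
        ∫ r : Ioi (0 : ℝ), f ((r : ℝ) • (ω : E)) ∂(Measure.volumeIoiPow (finrank ℝ E - 1)) :=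
    (integral_volumeIoiPow _ fun r ↦ f (r • (ω : E))).symm
  simp_rw [radial_integral]
  rw [← integral_prod (fun p : sphere (0 : E) 1 × Ioi (0 : ℝ) ↦ f ((p.2 : ℝ) • (p.1 : E)))
      (integrable_comp_smul_sphere_prod_Ioi μ hf),
    ← μ.measurePreserving_homeomorphUnitSphereProd.integral_comp
      (homeomorphUnitSphereProd E).measurableEmbedding]
  calc ∫ x, f x ∂μ = ∫ x : ({0}ᶜ : Set E), f x ∂(μ.comap (↑)) := by
        rw [integral_subtype_comap (measurableSet_singleton 0).compl, restrict_compl_singleton]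
    _ = _ := by
        refine integral_congr_ae (.of_forall fun x ↦ ?_)
        simp [smul_smul, norm_ne_zero_iff.2 x.2]

theorem integral_norm_pow_inv_smul_fderiv_self [CompleteSpace F] {f : E → F}
    (hf0 : ContinuousAt f 0) (hf : ∀ x ≠ 0, DifferentiableAt ℝ f x)
    (hf_infty : Tendsto f (cocompact E) (𝓝 0))
    (hint : Integrable (fun x ↦ (‖x‖ ^ finrank ℝ E)⁻¹ • fderiv ℝ f x x) μ) :
    ∫ x, (‖x‖ ^ finrank ℝ E)⁻¹ • fderiv ℝ f x x ∂μ =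
      -(finrank ℝ E * μ.real (ball 0 1)) • f 0 := by
  have radial_integrand (ω : sphere (0 : E) 1) : EqOn
      (fun r : ℝ ↦ r ^ (finrank ℝ E - 1) •
        (‖r • (ω : E)‖ ^ finrank ℝ E)⁻¹ • fderiv ℝ f (r • (ω : E)) (r • (ω : E)))
      (fun r ↦ fderiv ℝ f (r • (ω : E)) ω) (Ioi 0) := fun r (hr : 0 < r) ↦ by
    beta_reduce
    rw [norm_smul, norm_eq_of_mem_sphere, mul_one, Real.norm_of_nonneg hr.le, map_smul,
      smul_smul, smul_smul, mul_right_comm, pow_sub_one_mul finrank_pos.ne',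
      mul_inv_cancel₀ (pow_ne_zero _ hr.ne'), one_smul]
  calc ∫ x, (‖x‖ ^ finrank ℝ E)⁻¹ • fderiv ℝ f x x ∂μ
      = ∫ ω : sphere (0 : E) 1, (∫ r in Ioi (0 : ℝ), fderiv ℝ f (r • (ω : E)) ω) ∂μ.toSphere := by
        rw [integral_eq_integral_sphere_integral_Ioi μ hint]
        congr! 2 with ω
        exact setIntegral_congr_fun measurableSet_Ioi (radial_integrand ω)
    _ = ∫ _ : sphere (0 : E) 1, -f 0 ∂μ.toSphere := by
        refine integral_congr_ae ?_
        filter_upwards [ae_integrableOn_Ioi_pow_smul_comp_smul μ hint] with ω hω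
        exact integral_Ioi_fderiv_smul_apply hf0 hf hf_infty (ne_zero_of_mem_unit_sphere ω)
          (hω.congr_fun (radial_integrand ω) measurableSet_Ioi)
    _ = -(finrank ℝ E * μ.real (ball 0 1)) • f 0 := by
        rw [integral_const, Measure.toSphere_real_apply_univ, smul_neg, neg_smul]

end PolarCoordinates

section Clifford

variable {K A ι : Type*} [Field K] [Ring A] [Algebra K A] [Fintype ι] [DecidableEq ι]
  {α : ι → A}

lemma sum_smul_mul_of_anticommute [NeZero (2 : K)]
    (hα : ∀ j k, α j * α k + α k * α j = if j = k then 2 else 0)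
    {H : ι → ι → K} (hH : ∀ j k, H j k = H k j) :
    ∑ j, ∑ k, H j k • (α j * α k) = (∑ j, H j j) • (1 : A) := by
  have sum_swap : ∑ j, ∑ k, H j k • (α j * α k) = ∑ j, ∑ k, H j k • (α k * α j) := by
    rw [Finset.sum_comm]
    simp_rw [hH]
  have two_smul_sum : (2 : K) • ∑ j, ∑ k, H j k • (α j * α k) = (2 : K) • (∑ j, H j j) • 1 := by
    calc (2 : K) • ∑ j, ∑ k, H j k • (α j * α k)
        = ∑ j, ∑ k, H j k • (α j * α k + α k * α j) := by
          simp_rw [smul_add, Finset.sum_add_distrib, ← sum_swap, two_smul]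
      _ = ∑ j, H j j • (2 : A) := by simp [hα]
      _ = (2 : K) • (∑ j, H j j) • 1 := by
          rw [← Finset.sum_smul, smul_comm, two_smul K, one_add_one_eq_two]
  exact smul_right_injective A two_ne_zero two_smul_sum

/- The algebraic content of `(-iα·∇ + mβ)² = -Δ + m²`, tested against `χ`, with `g = ∫ Yχ`,
`h k = ∫ (∂_k Y)χ` and `H j k = ∫ (∂_k Y)(∂_j χ)`. -/
theorem clifford_dirac_factorization [Algebra ℂ A] {β : A}
    (hα : ∀ j k, α j * α k + α k * α j = if j = k then 2 else 0) (hβ : β * β = 1)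
    (hαβ : ∀ j, α j * β + β * α j = 0) (m g : ℂ) (h : ι → ℂ) {H : ι → ι → ℂ}
    (hH : ∀ j k, H j k = H k j) :
    Complex.I • ∑ j, α j * (-(m * h j) • β - Complex.I • ∑ k, H j k • α k) +
      m • (β * ((m * g) • β - Complex.I • ∑ k, h k • α k)) =
      (m ^ 2 * g + ∑ j, H j j) • (1 : A) := by
  have cross_terms_cancel : ∑ j, h j • (α j * β) = -∑ j, h j • (β * α j) := by
    simp_rw [eq_neg_of_add_eq_zero_left (hαβ _), smul_neg, Finset.sum_neg_distrib]
  have alpha_part : ∑ j, α j * (-(m * h j) • β - Complex.I • ∑ k, H j k • α k) =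
      m • ∑ k, h k • (β * α k) - Complex.I • (∑ j, H j j) • (1 : A) := by
    simp_rw [mul_sub, mul_smul_comm, Finset.mul_sum, mul_smul_comm, Finset.sum_sub_distrib,
      ← Finset.smul_sum, sum_smul_mul_of_anticommute hα hH, neg_smul, mul_smul,
      Finset.sum_neg_distrib, ← Finset.smul_sum, cross_terms_cancel, smul_neg, neg_neg]
  have beta_part : β * ((m * g) • β - Complex.I • ∑ k, h k • α k) =
      (m * g) • (1 : A) - Complex.I • ∑ k, h k • (β * α k) := by
    simp_rw [mul_sub, mul_smul_comm, Finset.mul_sum, mul_smul_comm, hβ]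
  rw [alpha_part, beta_part, smul_sub, smul_smul Complex.I Complex.I, Complex.I_mul_I]
  module

end Clifford

lemma diracAlpha_mul_add_mul (j k : Fin 3) :
    diracAlpha j * diracAlpha k + diracAlpha k * diracAlpha j = if j = k then 2 else 0 := by
  fin_cases j <;> fin_cases k <;>
    simp [diracAlpha, one_add_one_eq_two, ← Matrix.ext_iff, Fin.forall_fin_succ,
      Matrix.ofNat_apply]

lemma diracBeta_mul_self : diracBeta * diracBeta = 1 := by
  simp [diracBeta, ← Matrix.ext_iff, Fin.forall_fin_succ]

lemma diracAlpha_mul_diracBeta_add (j : Fin 3) :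
    diracAlpha j * diracBeta + diracBeta * diracAlpha j = 0 := by
  fin_cases j <;> simp [diracAlpha, diracBeta, ← Matrix.ext_iff, Fin.forall_fin_succ]

section Yukawa

open Module

variable {E F : Type*} [NormedAddCommGroup E] [InnerProductSpace ℝ E]

lemma hasFDerivAt_comp_norm {φ : ℝ → ℝ} {φ' : ℝ} {x : E} (hx : x ≠ 0)
    (hφ : HasDerivAt φ φ' ‖x‖) :
    HasFDerivAt (fun y ↦ φ ‖y‖) ((φ' / ‖x‖) • innerSL ℝ x) x := by
  have hnorm : HasFDerivAt (fun y : E ↦ ‖y‖) (‖x‖⁻¹ • innerSL ℝ x) x := by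
    convert ((hasStrictFDerivAt_norm_sq x).hasFDerivAt.sqrt (by simpa using hx)) using 1
    · simp
    · rw [Real.sqrt_sq (norm_nonneg x), ofNat_smul_eq_nsmul, ← Nat.cast_smul_eq_nsmul ℝ, smul_smul]
      congr 1
      field_simp
      norm_num
  simpa [smul_smul, div_eq_mul_inv, Function.comp_def] using hφ.comp_hasFDerivAt x hnorm

/-- The Yukawa potential `e^{-m‖x‖} / (4π‖x‖)`; in dimension three it is the fundamental solution
of `-Δ + m²`. Its value at the origin is `0`. -/
noncomputable def yukawa (m : ℝ) (x : E) : ℝ :=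
  Real.exp (-(m * ‖x‖)) / (4 * Real.pi * ‖x‖)

/-- The gradient `-(1 + m‖x‖) e^{-m‖x‖} x / (4π‖x‖³)` of the Yukawa potential off the origin,
with the value `0` at the origin. -/
noncomputable def yukawaGrad (m : ℝ) (x : E) : E :=
  (-((1 + m * ‖x‖) * Real.exp (-(m * ‖x‖)) / (4 * Real.pi * ‖x‖ ^ 3))) • x

lemma hasFDerivAt_yukawa (m : ℝ) {x : E} (hx : x ≠ 0) :
    HasFDerivAt (yukawa m) (innerSL ℝ (yukawaGrad m x)) x := by
  have hr : ‖x‖ ≠ 0 := norm_ne_zero_iff.2 hx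
  have hexp : HasDerivAt (fun r ↦ Real.exp (-(m * r))) (-(m * Real.exp (-(m * ‖x‖)))) ‖x‖ := by
    simpa [mul_comm] using ((hasDerivAt_id ‖x‖).const_mul m).neg.exp
  have hden : HasDerivAt (fun r ↦ 4 * Real.pi * r) (4 * Real.pi) ‖x‖ := by
    simpa using (hasDerivAt_id ‖x‖).const_mul (4 * Real.pi)
  have hgrad : innerSL ℝ (yukawaGrad m x) =
      ((-(m * Real.exp (-(m * ‖x‖))) * (4 * Real.pi * ‖x‖) -
        Real.exp (-(m * ‖x‖)) * (4 * Real.pi)) / (4 * Real.pi * ‖x‖) ^ 2 / ‖x‖) • innerSL ℝ x := by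
    rw [yukawaGrad, map_smul]
    congr 1
    field_simp
    ring
  rw [hgrad]
  exact hasFDerivAt_comp_norm hx (hexp.fun_div hden (by positivity))

lemma norm_pow_inv_smul_fderiv_self_eq_yukawa [NormedAddCommGroup F] [NormedSpace ℝ F] (m : ℝ)
    {χ : E → F} (hχ : Differentiable ℝ χ) (x : E) :
    (‖x‖ ^ 3)⁻¹ • fderiv ℝ (fun y ↦ ((1 + m * ‖y‖) * Real.exp (-(m * ‖y‖))) • χ y) x x =
      -(4 * Real.pi) • (m ^ 2 • yukawa m x • χ x + fderiv ℝ χ x (yukawaGrad m x)) := by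
  rcases eq_or_ne x 0 with rfl | hx
  · simp [yukawa, yukawaGrad]
  have hr : ‖x‖ ≠ 0 := norm_ne_zero_iff.2 hx
  have hprofile : HasDerivAt (fun r ↦ (1 + m * r) * Real.exp (-(m * r)))
      (-(m ^ 2 * ‖x‖ * Real.exp (-(m * ‖x‖)))) ‖x‖ := by
    have hlin : HasDerivAt (fun r ↦ m * r) m ‖x‖ := by
      simpa using (hasDerivAt_id ‖x‖).const_mul m
    have hprod := (hlin.const_add 1).fun_mul hlin.fun_neg.exp
    rwa [show m * Real.exp (-(m * ‖x‖)) + (1 + m * ‖x‖) * (Real.exp (-(m * ‖x‖)) * -m) =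
      -(m ^ 2 * ‖x‖ * Real.exp (-(m * ‖x‖))) by ring] at hprod
  rw [((hasFDerivAt_comp_norm hx hprofile).fun_smul (hχ x).hasFDerivAt).fderiv, yukawa, yukawaGrad]
  simp only [_root_.add_apply, _root_.smul_apply, ContinuousLinearMap.smulRight_apply,
    coe_innerSL_apply, real_inner_self_eq_norm_sq, smul_eq_mul, map_smul]
  match_scalars <;> field_simp

section LocallyIntegrable

variable [FiniteDimensional ℝ E] [MeasurableSpace E] [BorelSpace E]
  (μ : Measure E) [μ.IsAddHaarMeasure]

lemma locallyIntegrable_yukawa (hE : 1 < finrank ℝ E) (m : ℝ) :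
    LocallyIntegrable (yukawa m : E → ℝ) μ := by
  have hinv : LocallyIntegrable (fun x : E ↦ ‖x‖⁻¹) μ :=
    locallyIntegrable_of_norm_le_rpow hE.le (α := 1) (C := 1) (by exact_mod_cast hE)
      (.of_forall fun x ↦ by simp [Real.rpow_neg_one]) (by fun_prop)
  have hreg : Continuous fun x : E ↦ Real.exp (-(m * ‖x‖)) / (4 * Real.pi) := by fun_prop
  convert hinv.continuous_smul hreg using 2 with x
  rw [yukawa, smul_eq_mul, ← div_eq_mul_inv, div_div]

lemma locallyIntegrable_yukawaGrad (hE : 2 < finrank ℝ E) (m : ℝ) :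
    LocallyIntegrable (yukawaGrad m : E → E) μ := by
  have hinv : LocallyIntegrable (fun x : E ↦ (‖x‖ ^ 3)⁻¹ • x) μ := by
    refine locallyIntegrable_of_norm_le_rpow (by omega) (α := 2) (C := 1) (by exact_mod_cast hE)
      (.of_forall fun x ↦ ?_) (by fun_prop)
    rcases eq_or_ne x 0 with rfl | hx
    · simp
    · rw [norm_smul, norm_inv, norm_pow, norm_norm, Real.rpow_neg (norm_nonneg x), Real.rpow_two]
      field_simp
      exact le_rfl
  have hreg : Continuous fun x : E ↦ -((1 + m * ‖x‖) * Real.exp (-(m * ‖x‖)) / (4 * Real.pi)) := by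
    fun_prop
  convert hinv.continuous_smul hreg using 2 with x
  rw [yukawaGrad, smul_smul, neg_mul, ← div_eq_mul_inv, div_div]

lemma locallyIntegrable_inner_yukawaGrad (hE : 2 < finrank ℝ E) (m : ℝ) (v : E) :
    LocallyIntegrable (fun x : E ↦ inner ℝ (yukawaGrad m x) v) μ := by
  have := (innerSLFlip ℝ v).locallyIntegrableOn_comp
    ((locallyIntegrable_yukawaGrad μ hE m).locallyIntegrableOn Set.univ)
  simpa [locallyIntegrableOn_univ, Function.comp_def] using this

variable [NormedAddCommGroup F] [NormedSpace ℝ F]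

lemma integrable_clm_apply_yukawaGrad (hE : 2 < finrank ℝ E) (m : ℝ) {L : E → E →L[ℝ] F}
    (hL : Continuous L) (hc : HasCompactSupport L) :
    Integrable (fun x ↦ L x (yukawaGrad m x)) μ := by
  let b := stdOrthonormalBasis ℝ E
  have apply_eq_sum (x : E) :
      L x (yukawaGrad m x) = ∑ k, inner ℝ (yukawaGrad m x) (b k) • L x (b k) := by
    conv_lhs => rw [← b.sum_repr' (yukawaGrad m x), map_sum]
    simp_rw [map_smul, real_inner_comm]
  simp_rw [apply_eq_sum]
  exact integrable_finsetSum _ fun k _ ↦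
    (locallyIntegrable_inner_yukawaGrad μ hE m (b k)).integrable_smul_right_of_hasCompactSupport
      (hL.clm_apply continuous_const) (hc.comp_left (g := fun l : E →L[ℝ] F ↦ l (b k)) rfl)

end LocallyIntegrable

lemma three_mul_volume_real_unit_ball [FiniteDimensional ℝ E] [MeasurableSpace E] [BorelSpace E]
    (hE : finrank ℝ E = 3) : 3 * volume.real (Metric.ball (0 : E) 1) = 4 * Real.pi := by
  rw [measureReal_def, InnerProductSpace.volume_ball_of_dim_odd (k := 1) (by simp [hE]), hE,
    ENNReal.toReal_mul, ENNReal.toReal_ofReal (by positivity)]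
  simp [Nat.doubleFactorial]
  ring

theorem sq_smul_integral_yukawa_add_integral_fderiv_yukawaGrad
    [FiniteDimensional ℝ E] [MeasurableSpace E] [BorelSpace E] [NormedAddCommGroup F]
    [NormedSpace ℝ F] [CompleteSpace F] (hE : finrank ℝ E = 3)
    (m : ℝ) {χ : E → F} (hχ : ContDiff ℝ 1 χ) (hc : HasCompactSupport χ) :
    m ^ 2 • (∫ x, yukawa m x • χ x) + ∫ x, fderiv ℝ χ x (yukawaGrad m x) = χ 0 := by
  have : Nontrivial E := nontrivial_of_finrank_pos (R := ℝ) (by omega)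
  let f : E → F := fun x ↦ ((1 + m * ‖x‖) * Real.exp (-(m * ‖x‖))) • χ x
  have radial_deriv (x : E) :=
    norm_pow_inv_smul_fderiv_self_eq_yukawa m (hχ.differentiable one_ne_zero) x
  have hf : Continuous f := by have := hχ.continuous; fun_prop
  have hf_diff : ∀ x ≠ 0, DifferentiableAt ℝ f x := by
    intro x hx
    have := hχ.differentiable one_ne_zero x
    have := (contDiffAt_norm ℝ (n := 1) hx).differentiableAt one_ne_zero
    fun_prop
  have hf_infty : Filter.Tendsto f (Filter.cocompact E) (nhds 0) :=
    (hc.smul_left (f := fun x ↦ (1 + m * ‖x‖) * Real.exp (-(m * ‖x‖)))).is_zero_at_infty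
  have potential_integrable : Integrable fun x ↦ yukawa m x • χ x :=
    (locallyIntegrable_yukawa volume (by omega) m).integrable_smul_right_of_hasCompactSupport
      hχ.continuous hc
  have gradient_integrable : Integrable fun x ↦ fderiv ℝ χ x (yukawaGrad m x) :=
    integrable_clm_apply_yukawaGrad volume (by omega) m
      (hχ.continuous_fderiv one_ne_zero) (hc.fderiv ℝ)
  have polar_integrable : Integrable fun x ↦ (‖x‖ ^ finrank ℝ E)⁻¹ • fderiv ℝ f x x := by
    simp_rw [hE, f, radial_deriv]
    exact ((potential_integrable.smul _).add gradient_integrable).smul _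
  rw [← integral_smul, ← integral_add (potential_integrable.fun_smul _) gradient_integrable]
  refine smul_right_injective F (neg_ne_zero.2 (by positivity : 4 * Real.pi ≠ 0)) ?_
  calc -(4 * Real.pi) • ∫ x, m ^ 2 • yukawa m x • χ x + fderiv ℝ χ x (yukawaGrad m x)
      = ∫ x, (‖x‖ ^ finrank ℝ E)⁻¹ • fderiv ℝ f x x := by
        simp_rw [hE, f, radial_deriv, integral_smul]
    _ = -(finrank ℝ E * volume.real (Metric.ball (0 : E) 1)) • f 0 :=
        integral_norm_pow_inv_smul_fderiv_self volume hf.continuousAt hf_diff hf_infty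
          polar_integrable
    _ = -(4 * Real.pi) • χ 0 := by
        simp [f, hE, three_mul_volume_real_unit_ball hE]

end Yukawa

section Dirac

local notation "ℝ³" => EuclideanSpace ℝ (Fin 3)

lemma clm_apply_eq_sum_single {ι F : Type*} [Fintype ι] [DecidableEq ι] [NormedAddCommGroup F]
    [NormedSpace ℝ F] (L : EuclideanSpace ℝ ι →L[ℝ] F) (v : EuclideanSpace ℝ ι) :
    L v = ∑ k, v k • L (EuclideanSpace.single k 1) := by
  conv_lhs => rw [← (EuclideanSpace.basisFun ι ℝ).sum_repr v, map_sum]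
  simp

lemma locallyIntegrable_yukawaGrad_apply (m : ℝ) (k : Fin 3) :
    LocallyIntegrable fun x : ℝ³ ↦ yukawaGrad m x k := by
  simpa [EuclideanSpace.inner_single_right] using
    locallyIntegrable_inner_yukawaGrad volume (by simp) m (EuclideanSpace.single k (1 : ℝ))

section TestFunction

variable {F : Type*} [NormedAddCommGroup F] [NormedSpace ℝ F] {ψ χ : ℝ³ → F}

lemma integrable_yukawa_smul (m : ℝ) (hψ : Continuous ψ) (hc : HasCompactSupport ψ) :
    Integrable fun x ↦ yukawa m x • ψ x :=
  (locallyIntegrable_yukawa volume (by simp) m).integrable_smul_right_of_hasCompactSupport hψ hc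

lemma integrable_yukawaGrad_apply_smul (m : ℝ) (k : Fin 3) (hψ : Continuous ψ)
    (hc : HasCompactSupport ψ) : Integrable fun x : ℝ³ ↦ yukawaGrad m x k • ψ x :=
  (locallyIntegrable_yukawaGrad_apply m k).integrable_smul_right_of_hasCompactSupport hψ hc

lemma integral_yukawa_smul_fderiv_single (m : ℝ) (hχ : ContDiff ℝ 1 χ) (hc : HasCompactSupport χ)
    (j : Fin 3) : ∫ x, yukawa m x • fderiv ℝ χ x (EuclideanSpace.single j 1) =
      -∫ x : ℝ³, yukawaGrad m x j • χ x :=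
  integral_smul_fderiv_eq_neg_of_hasLineDerivAt_off_zero (by simp)
    (locallyIntegrable_yukawa volume (by simp) m) (locallyIntegrable_yukawaGrad_apply m j)
    (fun x hx ↦ by
      simpa [EuclideanSpace.inner_single_right] using
        (hasFDerivAt_yukawa m hx).hasLineDerivAt (EuclideanSpace.single j (1 : ℝ))) hχ hc

lemma integral_yukawaGrad_apply_smul_fderiv_single_comm (m : ℝ) (hχ : ContDiff ℝ 2 χ)
    (hc : HasCompactSupport χ) (j k : Fin 3) :
    ∫ x : ℝ³, yukawaGrad m x k • fderiv ℝ χ x (EuclideanSpace.single j 1) =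
      ∫ x : ℝ³, yukawaGrad m x j • fderiv ℝ χ x (EuclideanSpace.single k 1) := by
  simpa [EuclideanSpace.inner_single_right] using
    integral_fderiv_apply_smul_fderiv_comm_off_zero (by simp)
      (locallyIntegrable_yukawa volume (by simp) m)
      (locallyIntegrable_inner_yukawaGrad volume (by simp) m)
      (fun x hx ↦ hasFDerivAt_yukawa m hx) hχ hc
      (EuclideanSpace.single k (1 : ℝ)) (EuclideanSpace.single j 1)

lemma sq_smul_integral_yukawa_add_sum_integral_fderiv_single [CompleteSpace F] (m : ℝ)
    (hχ : ContDiff ℝ 1 χ) (hc : HasCompactSupport χ) :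
    m ^ 2 • (∫ x, yukawa m x • χ x) +
      ∑ j, ∫ x : ℝ³, yukawaGrad m x j • fderiv ℝ χ x (EuclideanSpace.single j 1) = χ 0 := by
  rw [← sq_smul_integral_yukawa_add_integral_fderiv_yukawaGrad (by simp) m hχ hc,
    ← integral_finsetSum _ fun j _ ↦ integrable_yukawaGrad_apply_smul m j
      ((hχ.continuous_fderiv one_ne_zero).clm_apply continuous_const) (hc.fderiv_apply ℝ _)]
  congr! 3 with x
  exact (clm_apply_eq_sum_single _ _).symm

end TestFunction

lemma phiFund_eq_yukawa (m : ℝ) (x : ℝ³) :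
    phiFund m x = ((m : ℂ) * yukawa m x) • diracBeta - Complex.I • alphaDot (yukawaGrad m x) := by
  have alphaDot_smul (c : ℝ) : alphaDot (c • x) = (c : ℂ) • alphaDot x := by
    simp [alphaDot, Finset.smul_sum, smul_smul, -Complex.coe_smul, Complex.ofReal_mul]
  rw [phiFund, yukawaGrad, alphaDot_smul, yukawa]
  rcases eq_or_ne x 0 with rfl | hx
  · simp
  have hr : (‖x‖ : ℂ) ≠ 0 := mod_cast norm_ne_zero_iff.2 hx
  push_cast
  match_scalars <;> field_simp

lemma phiFund_apply_eq_sub_sum (m : ℝ) (x : ℝ³) (a b : Fin 4) :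
    phiFund m x a b = yukawa m x • (m * diracBeta a b) -
      ∑ k, yukawaGrad m x k • (Complex.I * diracAlpha k a b) := by
  simp only [phiFund_eq_yukawa, alphaDot, Matrix.sub_apply, Matrix.smul_apply, Matrix.sum_apply,
    smul_eq_mul, Finset.mul_sum, Complex.real_smul]
  congr 1
  · ring
  · exact Finset.sum_congr rfl fun k _ ↦ by ring

lemma locallyIntegrable_phiFund_apply (m : ℝ) (a b : Fin 4) :
    LocallyIntegrable fun x : ℝ³ ↦ phiFund m x a b := by
  simp_rw [phiFund_apply_eq_sub_sum]
  exact ((locallyIntegrable_yukawa volume (by simp) m).smul_continuous continuous_const).sub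
    (locallyIntegrable_finsetSum _ fun k _ ↦
      (locallyIntegrable_yukawaGrad_apply m k).smul_continuous continuous_const)

lemma of_integral_mul_phiFund (m : ℝ) {ψ : ℝ³ → ℂ} (hψ : Continuous ψ)
    (hc : HasCompactSupport ψ) :
    (Matrix.of fun a b ↦ ∫ x, ψ x * phiFund m x a b) =
      (m * ∫ x, yukawa m x • ψ x : ℂ) • diracBeta -
        Complex.I • ∑ k, (∫ x : ℝ³, yukawaGrad m x k • ψ x) • diracAlpha k := by
  have gradient_integrable (k : Fin 3) := integrable_yukawaGrad_apply_smul m k hψ hc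
  have mul_phiFund_apply (x : ℝ³) (a b : Fin 4) : ψ x * phiFund m x a b =
      m * diracBeta a b * (yukawa m x • ψ x) -
        ∑ k, Complex.I * diracAlpha k a b * (yukawaGrad m x k • ψ x) := by
    simp only [phiFund_apply_eq_sub_sum, mul_comm (ψ x), sub_mul, Finset.sum_mul, smul_mul_assoc,
      mul_smul_comm]
  ext a b
  simp only [Matrix.of_apply, mul_phiFund_apply]
  rw [integral_sub ((integrable_yukawa_smul m hψ hc).const_mul _)
      (integrable_finsetSum _ fun k _ ↦ (gradient_integrable k).const_mul _),
    integral_finsetSum _ fun k _ ↦ (gradient_integrable k).const_mul _]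
  simp only [integral_const_mul, Matrix.sub_apply, Matrix.smul_apply, Matrix.sum_apply,
    smul_eq_mul, Finset.mul_sum]
  congr 1
  · ring
  · exact Finset.sum_congr rfl fun k _ ↦ by ring

end Dirac

theorem phiFund_locallyIntegrable_and_fundamental_general (m : ℝ) :
    (∀ a b : Fin 4,
      LocallyIntegrable (fun x : EuclideanSpace ℝ (Fin 3) => phiFund m x a b) volume) ∧
    (∀ χ : EuclideanSpace ℝ (Fin 3) → ℂ, ContDiff ℝ 2 χ → HasCompactSupport χ →
      Complex.I • (∑ j : Fin 3, diracAlpha j *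
          (Matrix.of fun a b =>
            ∫ x, fderiv ℝ χ x (EuclideanSpace.single j 1) * phiFund m x a b)) +
        (m : ℂ) • (diracBeta * (Matrix.of fun a b => ∫ x, χ x * phiFund m x a b)) =
      χ 0 • (1 : Matrix (Fin 4) (Fin 4) ℂ)) := by
  refine ⟨locallyIntegrable_phiFund_apply m, fun χ hχ hc ↦ ?_⟩
  have hχ_one : ContDiff ℝ 1 χ := hχ.of_le one_le_two
  have integral_partial (j : Fin 3) := of_integral_mul_phiFund m
    ((hχ.continuous_fderiv two_ne_zero).clm_apply continuous_const)
    (hc.fderiv_apply ℝ (EuclideanSpace.single j 1))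
  simp only [integral_partial, of_integral_mul_phiFund m hχ.continuous hc,
    integral_yukawa_smul_fderiv_single m hχ_one hc, mul_neg]
  rw [clifford_dirac_factorization diracAlpha_mul_add_mul diracBeta_mul_self
      diracAlpha_mul_diracBeta_add m _ _
      (integral_yukawaGrad_apply_smul_fderiv_single_comm m hχ hc),
    ← sq_smul_integral_yukawa_add_sum_integral_fderiv_single m hχ_one hc, Complex.real_smul,
    Complex.ofReal_pow]

/-- For `m > 0`, the fundamental solution `φ` is locally integrable (entrywise) on `ℝ³`, and it
is a fundamental solution of the free Dirac operator in the distributional sense: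
for every smooth compactly supported `χ : ℝ³ → ℂ`,
`i Σ_j α_j (∫ (∂_j χ) φ dx) + m β (∫ χ φ dx) = χ(0) I₄`. -/
theorem phiFund_locallyIntegrable_and_fundamental (m : ℝ) (hm : 0 < m) :
    (∀ a b : Fin 4,
      LocallyIntegrable (fun x : EuclideanSpace ℝ (Fin 3) => phiFund m x a b) volume) ∧
    (∀ χ : EuclideanSpace ℝ (Fin 3) → ℂ, ContDiff ℝ (⊤ : ℕ∞) χ → HasCompactSupport χ →
      Complex.I • (∑ j : Fin 3, diracAlpha j *
          (Matrix.of fun a b =>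
            ∫ x, fderiv ℝ χ x (EuclideanSpace.single j 1) * phiFund m x a b)) +
        (m : ℂ) • (diracBeta * (Matrix.of fun a b => ∫ x, χ x * phiFund m x a b)) =
      χ 0 • (1 : Matrix (Fin 4) (Fin 4) ℂ)) :=
  (phiFund_locallyIntegrable_and_fundamental_general m).imp_right
    fun h χ hχ ↦ h χ (contDiff_infty.1 hχ 2)
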